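/- arXiv:math/9511203 — 2 statements merged into one kernel-verified Lean document; each statement's English description precedes it below -/
import Mathlib

section
/- The set 𝔖 is a discrete subset of ℂ: every point ζ₀ ∈ ℂ possesses an open neighborhood U such that 𝔖 ∩ U ⊆ {ζ₀}. -/
open MeasureTheory Set

/-- The ordinary differential operator `H_ζ` acting on functions on `ℝ`:
`(H_ζ f)(x) = f″(x) + (β₁(x)+β₂(x))·f′(x)
  + (ζ²·a(x)² − iζ·a′(x) + iζ·a(x)·(β₁(x)−β₂(x)) + β₃(x))·f(x)`. -/
noncomputable def Hop (a : ℝ → ℝ) (β₁ β₂ β₃ : ℝ → ℂ) (ζ : ℂ) (f : ℝ → ℂ) (x : ℝ) : ℂ :=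
  deriv (deriv f) x + (β₁ x + β₂ x) * deriv f x +
    (ζ ^ 2 * (Complex.ofReal (a x)) ^ 2 - Complex.I * ζ * Complex.ofReal (deriv a x)
      + Complex.I * ζ * Complex.ofReal (a x) * (β₁ x - β₂ x) + β₃ x) * f x

/-- The set `𝔖` of `ζ ∈ ℂ` for which the Dirichlet problem `H_ζ g = 0` on `I = [-r,r]`,
`g(-r) = g(r) = 0`, has a nontrivial solution. -/
def frakS (r : ℝ) (a : ℝ → ℝ) (β₁ β₂ β₃ : ℝ → ℂ) : Set ℂ :=
  {ζ : ℂ | ∃ g : ℝ → ℂ, ContDiff ℝ 2 g ∧ (∃ x ∈ Icc (-r) r, g x ≠ 0) ∧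
    (∀ x ∈ Icc (-r) r, Hop a β₁ β₂ β₃ ζ g x = 0) ∧ g (-r) = 0 ∧ g r = 0}

/-!
Dirichlet eigenvalues are detected by shooting: `g'' + p g' + q g = 0` has a nontrivial solution
vanishing at both ends of `[l, u]` iff the solution with `g l = 0`, `g' l = 1` vanishes at `u`. That
value is an entry of the fundamental solution of the companion system, obtained by inverting
`1 - (Volterra operator)`; the operator is affine in `(p, q)` and the inverse always exists, so the
value is entire in `ζ` when `q` is. Its zeros are therefore isolated unless it vanishes
identically. The latter is excluded on the imaginary axis: for `ζ = iη` with `η` large the leading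
term of the potential is `-η² a²`, which makes `|g|²` convex for every solution `g`.
-/

section Volterra

variable {E : Type*} [NormedAddCommGroup E] [NormedSpace ℂ E] {l u : ℝ}

/-- Integration from the left end point, as an operator on `C([l, u], E)`. A continuous function on
`[l, u]` is extended to `ℝ` by its end values in order to be integrated. -/
noncomputable def volterraCLM (h : l ≤ u) : C(Icc l u, E) →L[ℂ] C(Icc l u, E) :=
  LinearMap.mkContinuous
    { toFun := fun f => ⟨fun x => ∫ t in l..x, IccExtend h f t,
        (intervalIntegral.continuous_primitive
          (fun _ _ => f.continuous.Icc_extend'.intervalIntegrable _ _) l).comp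
          continuous_subtype_val⟩
      map_add' := fun f g => by
        ext x
        exact intervalIntegral.integral_add (f.continuous.Icc_extend'.intervalIntegrable _ _)
          (g.continuous.Icc_extend'.intervalIntegrable _ _)
      map_smul' := fun c f => by
        ext x
        exact intervalIntegral.integral_smul c (IccExtend h f) }
    (u - l) fun f => by
      refine (ContinuousMap.norm_le _ (mul_nonneg (sub_nonneg.2 h) (norm_nonneg f))).2 fun x => ?_
      refine (intervalIntegral.norm_integral_le_of_norm_le_const
        (C := ‖f‖) fun t _ => f.norm_coe_le_norm _).trans ?_
      rw [abs_of_nonneg (sub_nonneg.2 x.2.1), mul_comm]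
      gcongr
      exact x.2.2

theorem volterraCLM_apply (h : l ≤ u) (f : C(Icc l u, E)) (x : Icc l u) :
    volterraCLM h f x = ∫ t in l..x, IccExtend h f t := rfl

theorem volterraCLM_apply_left (h : l ≤ u) (f : C(Icc l u, E)) :
    volterraCLM h f ⟨l, left_mem_Icc.2 h⟩ = 0 :=
  intervalIntegral.integral_same

theorem hasDerivWithinAt_volterraCLM [CompleteSpace E] (h : l ≤ u) (f : C(Icc l u, E))
    (x : Icc l u) : HasDerivWithinAt (IccExtend h (volterraCLM h f)) (f x) (Icc l u) x := by
  have hprim : HasDerivAt (fun y => ∫ t in l..y, IccExtend h f t) (f x) x := by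
    simpa only [IccExtend_val] using
      ((f.continuous.Icc_extend' (h := h)).integral_hasStrictDerivAt l (x : ℝ)).hasDerivAt
  refine hprim.hasDerivWithinAt.congr_of_mem (fun y hy => ?_) x.2
  rw [IccExtend_of_mem h _ hy, volterraCLM_apply]

theorem norm_volterraCLM_apply_le (h : l ≤ u) {f : C(Icc l u, E)} {C : ℝ} {n : ℕ}
    (hf : ∀ x : Icc l u, ‖f x‖ ≤ C * (x - l) ^ n) (x : Icc l u) :
    ‖volterraCLM h f x‖ ≤ C * ((x - l) ^ (n + 1) / (n + 1)) := by
  have hint : ∫ t in l..x, C * (t - l) ^ n = C * ((x - l) ^ (n + 1) / (n + 1)) := by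
    rw [intervalIntegral.integral_const_mul,
      intervalIntegral.integral_comp_sub_right (fun t => t ^ n) l, integral_pow]
    simp
  rw [← hint]
  refine intervalIntegral.norm_integral_le_of_norm_le x.2.1 (.of_forall fun t ht => ?_)
    (Continuous.intervalIntegrable (by fun_prop) _ _)
  have ht' : t ∈ Icc l u := ⟨ht.1.le, ht.2.trans x.2.2⟩
  rw [IccExtend_of_mem h f ht']
  exact hf ⟨t, ht'⟩

end Volterra

theorem isUnit_one_sub_of_norm_pow_lt_one {R : Type*} [NormedRing R] [CompleteSpace R] {a : R}
    {n : ℕ} (ha : ‖a ^ n‖ < 1) : IsUnit (1 - a) := by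
  have hpow : IsUnit (1 - a ^ n) := isUnit_one_sub_of_norm_lt_one ha
  rw [← mul_neg_geom_sum] at hpow
  have hcomm : Commute (1 - a) (∑ i ∈ Finset.range n, a ^ i) :=
    Commute.sum_right _ _ _ fun i _ =>
      ((Commute.one_left _).sub_left (Commute.refl a)).pow_right i
  exact (hcomm.isUnit_mul_iff.1 hpow).1

section FundamentalSolution

variable {R : Type*} [NormedRing R] [NormedAlgebra ℂ R] {l u : ℝ}

/-- The Volterra operator `Y ↦ ∫_l^x A Y` whose fixed-point equation `Y = 1 + ∫ A Y` is the
integral form of `Y' = A Y`, `Y l = 1`. -/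
noncomputable def volterraMulCLM (h : l ≤ u) (A : C(Icc l u, R)) :
    C(Icc l u, R) →L[ℂ] C(Icc l u, R) :=
  volterraCLM h ∘L ContinuousLinearMap.mul ℂ C(Icc l u, R) A

theorem volterraMulCLM_apply (h : l ≤ u) (A Y : C(Icc l u, R)) :
    volterraMulCLM h A Y = volterraCLM h (A * Y) := rfl

theorem norm_volterraMulCLM_pow_apply_le (h : l ≤ u) (A Y : C(Icc l u, R)) (n : ℕ)
    (x : Icc l u) :
    ‖(volterraMulCLM h A ^ n) Y x‖ ≤ ‖A‖ ^ n / n.factorial * ‖Y‖ * (x - l) ^ n := by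
  induction n generalizing x with
  | zero => simpa using Y.norm_coe_le_norm x
  | succ n ih =>
    set Z := (volterraMulCLM h A ^ n) Y
    have hAZ (y : Icc l u) :
        ‖(A * Z) y‖ ≤ ‖A‖ * (‖A‖ ^ n / n.factorial * ‖Y‖) * (y - l) ^ n :=
      calc ‖(A * Z) y‖ ≤ ‖A y‖ * ‖Z y‖ := norm_mul_le _ _
        _ ≤ ‖A‖ * (‖A‖ ^ n / n.factorial * ‖Y‖ * (y - l) ^ n) := by
          gcongr
          · exact A.norm_coe_le_norm y
          · exact ih y
        _ = _ := by ring
    rw [pow_succ', mul_apply_eq_comp, volterraMulCLM_apply]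
    refine (norm_volterraCLM_apply_le h hAZ x).trans_eq ?_
    rw [Nat.factorial_succ]
    push_cast
    field_simp
    ring

theorem norm_volterraMulCLM_pow_le (h : l ≤ u) (A : C(Icc l u, R)) (n : ℕ) :
    ‖volterraMulCLM h A ^ n‖ ≤ (‖A‖ * (u - l)) ^ n / n.factorial := by
  have : 0 ≤ u - l := sub_nonneg.2 h
  refine ContinuousLinearMap.opNorm_le_bound _ (by positivity) fun Y => ?_
  refine (ContinuousMap.norm_le _ (by positivity)).2 fun x => ?_
  calc ‖(volterraMulCLM h A ^ n) Y x‖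
      ≤ ‖A‖ ^ n / n.factorial * ‖Y‖ * (x - l) ^ n := norm_volterraMulCLM_pow_apply_le h A Y n x
    _ ≤ ‖A‖ ^ n / n.factorial * ‖Y‖ * (u - l) ^ n := by
        gcongr
        · exact sub_nonneg.2 x.2.1
        · exact x.2.2
    _ = _ := by rw [mul_pow]; ring

variable [CompleteSpace R]

theorem isUnit_one_sub_volterraMulCLM (h : l ≤ u) (A : C(Icc l u, R)) :
    IsUnit (1 - volterraMulCLM h A) := by
  obtain ⟨n, hn⟩ := ((FloorSemiring.tendsto_pow_div_factorial_atTop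
    (‖A‖ * (u - l))).eventually_lt_const one_pos).exists
  exact isUnit_one_sub_of_norm_pow_lt_one (R := C(Icc l u, R) →L[ℂ] C(Icc l u, R))
    ((norm_volterraMulCLM_pow_le h A n).trans_lt hn)

/-- The solution of `Y' = A Y`, `Y l = 1` on `[l, u]`, for a continuous coefficient `A` with values
in a Banach algebra. -/
noncomputable def fundamentalSolution (h : l ≤ u) (A : C(Icc l u, R)) : C(Icc l u, R) :=
  Ring.inverse (1 - volterraMulCLM h A) 1

theorem fundamentalSolution_eq (h : l ≤ u) (A : C(Icc l u, R)) :
    fundamentalSolution h A = 1 + volterraCLM h (A * fundamentalSolution h A) := by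
  rw [← sub_eq_iff_eq_add, ← volterraMulCLM_apply]
  change (1 - volterraMulCLM h A) (Ring.inverse (1 - volterraMulCLM h A) 1) = 1
  rw [← mul_apply_eq_comp, Ring.mul_inverse_cancel _ (isUnit_one_sub_volterraMulCLM h A),
    one_apply_eq_self]

theorem fundamentalSolution_left (h : l ≤ u) (A : C(Icc l u, R)) :
    fundamentalSolution h A ⟨l, left_mem_Icc.2 h⟩ = 1 := by
  rw [fundamentalSolution_eq, ContinuousMap.add_apply, volterraCLM_apply_left]
  simp

theorem hasDerivWithinAt_fundamentalSolution (h : l ≤ u) (A : C(Icc l u, R)) (x : Icc l u) :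
    HasDerivWithinAt (IccExtend h (fundamentalSolution h A)) (A x * fundamentalSolution h A x)
      (Icc l u) x := by
  refine ((hasDerivWithinAt_volterraCLM h (A * fundamentalSolution h A) x).const_add 1).congr_of_mem
    (fun y hy => ?_) x.2
  rw [IccExtend_of_mem h _ hy, IccExtend_of_mem h _ hy]
  exact DFunLike.congr_fun (fundamentalSolution_eq h A) ⟨y, hy⟩

theorem differentiable_fundamentalSolution (h : l ≤ u) :
    Differentiable ℂ (fundamentalSolution h : C(Icc l u, R) → C(Icc l u, R)) := by
  have hmul : Differentiable ℂ (volterraMulCLM h : C(Icc l u, R) → _) :=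
    (ContinuousLinearMap.compL ℂ C(Icc l u, R) C(Icc l u, R) C(Icc l u, R)
      (volterraCLM h) ∘L ContinuousLinearMap.mul ℂ C(Icc l u, R)).differentiable
  exact ((hmul.const_sub 1).inverse (isUnit_one_sub_volterraMulCLM h)).clm_apply
    (differentiable_const 1)

end FundamentalSolution

section LinearODE

variable {E : Type*} [NormedAddCommGroup E] [NormedSpace ℂ E] [CompleteSpace E] {l u : ℝ}

theorem hasDerivWithinAt_fundamentalSolution_apply (h : l ≤ u) (A : C(Icc l u, E →L[ℂ] E)) (v : E)
    (x : Icc l u) :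
    HasDerivWithinAt (fun t => IccExtend h (fundamentalSolution h A) t v)
      (A x (fundamentalSolution h A x v)) (Icc l u) x :=
  ((ContinuousLinearMap.apply ℂ E v).restrictScalars ℝ).hasFDerivAt.comp_hasDerivWithinAt (x : ℝ)
    (hasDerivWithinAt_fundamentalSolution h A x)

theorem eq_fundamentalSolution_apply (h : l ≤ u) {A : C(Icc l u, E →L[ℂ] E)} {y : ℝ → E}
    (hy : ∀ x : Icc l u, HasDerivWithinAt y (A x (y x)) (Icc l u) x) (x : Icc l u) :
    y x = fundamentalSolution h A x (y l) := by
  have hlip (t : ℝ) : LipschitzWith ‖A‖₊ (IccExtend h A t : E →L[ℂ] E) :=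
    (IccExtend h A t : E →L[ℂ] E).lipschitz.weaken (A.norm_coe_le_norm _)
  have hright {z : ℝ → E} (hz : ∀ x : Icc l u, HasDerivWithinAt z (A x (z x)) (Icc l u) x) :
      ∀ t ∈ Ico l u, HasDerivWithinAt z (IccExtend h A t (z t)) (Ici t) t := fun t ht => by
    rw [IccExtend_of_mem h A (Ico_subset_Icc_self ht)]
    exact (hz ⟨t, Ico_subset_Icc_self ht⟩).mono_of_mem_nhdsWithin (Icc_mem_nhdsGE_of_mem ht)
  have hcont {z : ℝ → E} (hz : ∀ x : Icc l u, HasDerivWithinAt z (A x (z x)) (Icc l u) x) :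
      ContinuousOn z (Icc l u) := fun t ht => (hz ⟨t, ht⟩).continuousWithinAt
  have hY (x : Icc l u) : HasDerivWithinAt
      (fun t => IccExtend h (fundamentalSolution h A) t (y l))
      (A x (IccExtend h (fundamentalSolution h A) x (y l))) (Icc l u) x := by
    rw [IccExtend_val]
    exact hasDerivWithinAt_fundamentalSolution_apply h A (y l) x
  have hinit : y l = IccExtend h (fundamentalSolution h A) l (y l) := by
    rw [IccExtend_left, fundamentalSolution_left, one_apply_eq_self]
  simpa using ODE_solution_unique hlip (hcont hy) (hright hy) (hcont hY) (hright hY) hinit x.2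

end LinearODE

section Dirichlet

/-- The coefficient of the first-order system equivalent to `g'' + p g' + q g = 0`, whose unknown is
the pair `(g, g')`. -/
noncomputable def companion {X : Type*} [TopologicalSpace X] (p q : C(X, ℂ)) :
    C(X, ℂ × ℂ →L[ℂ] ℂ × ℂ) :=
  .const X (.inl ℂ ℂ ℂ ∘L .snd ℂ ℂ ℂ)
    - ((ContinuousLinearMap.toSpanSingleton ℂ (.inr ℂ ℂ ℂ ∘L .snd ℂ ℂ ℂ)).compLeftContinuous ℂ X p
      + (ContinuousLinearMap.toSpanSingleton ℂ (.inr ℂ ℂ ℂ ∘L .fst ℂ ℂ ℂ)).compLeftContinuous ℂ X q)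

theorem companion_apply {X : Type*} [TopologicalSpace X] (p q : C(X, ℂ)) (x : X) (v : ℂ × ℂ) :
    companion p q x v = (v.2, -(p x * v.2 + q x * v.1)) := by
  ext <;> simp [companion]

theorem differentiable_compLeftContinuous_comp {X F E G : Type*} [TopologicalSpace X]
    [CompactSpace X] [NormedAddCommGroup F] [NormedSpace ℂ F] [NormedAddCommGroup E]
    [NormedSpace ℂ E] [NormedAddCommGroup G] [NormedSpace ℂ G] (T : E →L[ℂ] G) {c : F → C(X, E)}
    (hc : Differentiable ℂ c) : Differentiable ℂ fun ζ => T.compLeftContinuous ℂ X (c ζ) :=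
  (T.compLeftContinuous ℂ X).differentiable.comp hc

theorem differentiable_companion {X F : Type*} [TopologicalSpace X] [CompactSpace X]
    [NormedAddCommGroup F] [NormedSpace ℂ F] {p q : F → C(X, ℂ)} (hp : Differentiable ℂ p)
    (hq : Differentiable ℂ q) : Differentiable ℂ fun ζ => companion (p ζ) (q ζ) := by
  have hP := differentiable_compLeftContinuous_comp
    (ContinuousLinearMap.toSpanSingleton ℂ (.inr ℂ ℂ ℂ ∘L .snd ℂ ℂ ℂ)) hp
  have hQ := differentiable_compLeftContinuous_comp
    (ContinuousLinearMap.toSpanSingleton ℂ (.inr ℂ ℂ ℂ ∘L .fst ℂ ℂ ℂ)) hq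
  exact (hP.fun_add hQ).const_sub _

variable {l u : ℝ}

/-- The Dirichlet problem `g'' + p g' + q g = 0` on `[l, u]`, `g l = g u = 0` has a nontrivial
solution. The derivative `g'` is carried along and taken within `[l, u]`. -/
def HasDirichletSolution (p q : C(Icc l u, ℂ)) : Prop :=
  ∃ g g' : ℝ → ℂ, (∀ x : Icc l u, HasDerivWithinAt g (g' x) (Icc l u) x) ∧
    (∀ x : Icc l u, HasDerivWithinAt g' (-(p x * g' x + q x * g x)) (Icc l u) x) ∧
    g l = 0 ∧ g u = 0 ∧ ∃ x ∈ Icc l u, g x ≠ 0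

theorem hasDirichletSolution_of_contDiff {p q : C(Icc l u, ℂ)} {g : ℝ → ℂ} (hg : ContDiff ℝ 2 g)
    (hode : ∀ x : Icc l u, deriv (deriv g) x + p x * deriv g x + q x * g x = 0)
    (hl : g l = 0) (hu : g u = 0) (hne : ∃ x ∈ Icc l u, g x ≠ 0) : HasDirichletSolution p q := by
  obtain ⟨hgd, -, hg1⟩ := (contDiff_succ_iff_deriv (n := 1)).1 hg
  refine ⟨g, deriv g, fun x => (hgd x).hasDerivAt.hasDerivWithinAt, fun x => ?_, hl, hu, hne⟩
  have hg2 : deriv (deriv g) x = -(p x * deriv g x + q x * g x) := by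
    linear_combination hode x
  exact hg2 ▸ (hg1.differentiable one_ne_zero x).hasDerivAt.hasDerivWithinAt

/-- The shooting function of the Dirichlet problem: the value at `u` of the solution of
`g'' + p g' + q g = 0` with `g l = 0`, `g' l = 1`. -/
noncomputable def dirichletDet (h : l ≤ u) (p q : C(Icc l u, ℂ)) : ℂ :=
  (fundamentalSolution h (companion p q) ⟨u, right_mem_Icc.2 h⟩ (0, 1)).1

theorem differentiable_dirichletDet {F : Type*} [NormedAddCommGroup F] [NormedSpace ℂ F]
    (h : l ≤ u) {p q : F → C(Icc l u, ℂ)} (hp : Differentiable ℂ p) (hq : Differentiable ℂ q) :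
    Differentiable ℂ fun ζ => dirichletDet h (p ζ) (q ζ) := by
  let entry : C(Icc l u, ℂ × ℂ →L[ℂ] ℂ × ℂ) →L[ℂ] ℂ :=
    .fst ℂ ℂ ℂ ∘L ContinuousLinearMap.apply ℂ (ℂ × ℂ) ((0, 1) : ℂ × ℂ) ∘L
      ContinuousMap.evalCLM ℂ (⟨u, right_mem_Icc.2 h⟩ : Icc l u)
  have hY : Differentiable ℂ fun ζ => fundamentalSolution h (companion (p ζ) (q ζ)) :=
    (differentiable_fundamentalSolution (R := ℂ × ℂ →L[ℂ] ℂ × ℂ) h).comp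
      (differentiable_companion hp hq)
  exact (entry.differentiable.comp hY :)

theorem HasDirichletSolution.dirichletDet_eq_zero (h : l ≤ u) {p q : C(Icc l u, ℂ)}
    (hpq : HasDirichletSolution p q) : dirichletDet h p q = 0 := by
  obtain ⟨g, g', hg, hg', hl, hu, x, hx, hgx⟩ := hpq
  have hsol (t : Icc l u) :
      (g t, g' t) = g' l • fundamentalSolution h (companion p q) t (0, 1) := by
    have := eq_fundamentalSolution_apply h (A := companion p q) (y := fun t => (g t, g' t))
      (fun s => by simpa only [companion_apply] using (hg s).prodMk (hg' s)) t
    rw [this, ← map_smul]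
    simp [hl]
  have hgl : g' l ≠ 0 := fun hzero => hgx (by simpa [hzero] using congrArg Prod.fst (hsol ⟨x, hx⟩))
  have hend : 0 = g' l * dirichletDet h p q := by
    simpa [hu, dirichletDet] using congrArg Prod.fst (hsol ⟨u, right_mem_Icc.2 h⟩)
  exact (mul_eq_zero.1 hend.symm).resolve_left hgl

theorem hasDirichletSolution_of_dirichletDet_eq_zero (h : l < u) {p q : C(Icc l u, ℂ)}
    (hdet : dirichletDet h.le p q = 0) : HasDirichletSolution p q := by
  set Y := fundamentalSolution h.le (companion p q) with hY
  set y : ℝ → ℂ × ℂ := fun t => IccExtend h.le Y t (0, 1) with hy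
  have hyl : y l = (0, 1) := by
    simp only [hy, IccExtend_left, hY, fundamentalSolution_left, one_apply_eq_self]
  have hderiv (x : Icc l u) :
      HasDerivWithinAt y ((y x).2, -(p x * (y x).2 + q x * (y x).1)) (Icc l u) x := by
    rw [← companion_apply]
    simpa [hy] using hasDerivWithinAt_fundamentalSolution_apply h.le (companion p q) (0, 1) x
  have hfst (x : Icc l u) : HasDerivWithinAt (fun t => (y t).1) (y x).2 (Icc l u) x :=
    (hderiv x).fst
  refine ⟨fun t => (y t).1, fun t => (y t).2, hfst,
    fun x => (hderiv x).snd, by simp [hyl], ?_, ?_⟩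
  · simpa [hy, IccExtend_right, dirichletDet] using hdet
  · by_contra! hzero
    have hlmem : l ∈ Icc l u := left_mem_Icc.2 h.le
    have hconst : HasDerivWithinAt (fun t => (y t).1) 0 (Icc l u) l :=
      (hasDerivWithinAt_const l (Icc l u) (0 : ℂ)).congr hzero (hzero l hlmem)
    have := (uniqueDiffOn_Icc h l hlmem).eq_deriv _ (hfst ⟨l, hlmem⟩) hconst
    simp [hyl] at this

theorem compl_setOf_hasDirichletSolution_mem_codiscrete (h : l < u) {p q : ℂ → C(Icc l u, ℂ)}
    (hp : Differentiable ℂ p) (hq : Differentiable ℂ q)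
    (hne : ∃ ζ, ¬ HasDirichletSolution (p ζ) (q ζ)) :
    {ζ | HasDirichletSolution (p ζ) (q ζ)}ᶜ ∈ Filter.codiscrete ℂ := by
  obtain ⟨ζ, hζ⟩ := hne
  have hentire : AnalyticOnNhd ℂ (fun ζ => dirichletDet h.le (p ζ) (q ζ)) univ :=
    (differentiable_dirichletDet h.le hp hq).differentiableOn.analyticOnNhd isOpen_univ
  have hdet : dirichletDet h.le (p ζ) (q ζ) ≠ 0 :=
    fun hdet => hζ (hasDirichletSolution_of_dirichletDet_eq_zero h hdet)
  filter_upwards [hentire.preimage_zero_mem_codiscrete hdet] with z hz hsol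
  exact hz (hsol.dirichletDet_eq_zero h.le)

end Dirichlet

section Convexity

variable {l u : ℝ}

/-- If `g'' = -(p g' + q g)`, then `(|g|²)'' / 2 = |g'|² + Re (ḡ g'')`, and the cross term is
absorbed by `|p| |g| |g'| ≤ |g'|² + |p|² |g|² / 4`. -/
theorem inner_add_norm_sq_nonneg {p q v w : ℂ} (hpq : ‖p‖ ^ 2 ≤ -4 * q.re) :
    0 ≤ inner ℝ v (-(p * w + q * v)) + ‖w‖ ^ 2 := by
  have hq : inner ℝ v (q * v) = q.re * ‖v‖ ^ 2 := by
    rw [Complex.sq_norm, Complex.normSq_apply, Complex.inner]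
    simp
    ring
  have hp : inner ℝ v (p * w) ≤ ‖v‖ * (‖p‖ * ‖w‖) :=
    (real_inner_le_norm _ _).trans_eq (by rw [norm_mul])
  rw [inner_neg_right, inner_add_right, hq]
  nlinarith [sq_nonneg (‖p‖ * ‖v‖ - 2 * ‖w‖), mul_le_mul_of_nonneg_right hpq (sq_nonneg ‖v‖)]

theorem convexOn_norm_sq_of_ode {s : Set ℝ} (hs : Convex ℝ s) {p q g g' : ℝ → ℂ}
    (hg : ∀ x ∈ s, HasDerivWithinAt g (g' x) s x)
    (hg' : ∀ x ∈ s, HasDerivWithinAt g' (-(p x * g' x + q x * g x)) s x)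
    (hpq : ∀ x ∈ s, ‖p x‖ ^ 2 ≤ -4 * (q x).re) : ConvexOn ℝ s fun x => ‖g x‖ ^ 2 := by
  have hd1 (x) (hx : x ∈ s) := (hg x hx).norm_sq
  have hd2 (x) (hx : x ∈ s) := ((hg x hx).inner ℝ (hg' x hx)).const_mul 2
  refine convexOn_of_hasDerivWithinAt2_nonneg hs (fun x hx => (hd1 x hx).continuousWithinAt)
    (fun x hx => (hd1 x (interior_subset hx)).mono interior_subset)
    (fun x hx => (hd2 x (interior_subset hx)).mono interior_subset) fun x hx => ?_
  rw [real_inner_self_eq_norm_sq]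
  exact mul_nonneg zero_le_two (inner_add_norm_sq_nonneg (hpq x (interior_subset hx)))

theorem not_hasDirichletSolution_of_norm_sq_le {p q : C(Icc l u, ℂ)}
    (hpq : ∀ x, ‖p x‖ ^ 2 ≤ -4 * (q x).re) : ¬ HasDirichletSolution p q := by
  rintro ⟨g, g', hg, hg', hl, hu, x, hx, hgx⟩
  have h : l ≤ u := hx.1.trans hx.2
  have hconv : ConvexOn ℝ (Icc l u) fun t => ‖g t‖ ^ 2 :=
    convexOn_norm_sq_of_ode (p := IccExtend h p) (q := IccExtend h q) (convex_Icc l u)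
      (fun t ht => hg ⟨t, ht⟩)
      (fun t ht => by simpa only [IccExtend_of_mem h _ ht] using hg' ⟨t, ht⟩)
      fun t _ => hpq _
  have hle := hconv.le_on_segment (left_mem_Icc.2 h) (right_mem_Icc.2 h)
    (by rwa [segment_eq_Icc h])
  simp only [hl, hu] at hle
  exact hgx (by simpa using hle)

end Convexity

section QuadraticPencil

/-- The potential `ζ² c₂ + ζ c₁ + c₀`, the form in which the spectral parameter enters `H_ζ`. -/
noncomputable def quadraticPencil {X : Type*} [TopologicalSpace X] (c₀ c₁ c₂ : C(X, ℂ)) (ζ : ℂ) :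
    C(X, ℂ) :=
  ζ ^ 2 • c₂ + ζ • c₁ + c₀

theorem quadraticPencil_apply {X : Type*} [TopologicalSpace X] (c₀ c₁ c₂ : C(X, ℂ)) (ζ : ℂ)
    (x : X) : quadraticPencil c₀ c₁ c₂ ζ x = ζ ^ 2 * c₂ x + ζ * c₁ x + c₀ x := rfl

variable {X : Type*} [TopologicalSpace X] [CompactSpace X]

theorem differentiable_quadraticPencil (c₀ c₁ c₂ : C(X, ℂ)) :
    Differentiable ℂ (quadraticPencil c₀ c₁ c₂) := by
  unfold quadraticPencil
  fun_prop

theorem exists_norm_sq_le_neg_re_quadraticPencil (p c₀ c₁ : C(X, ℂ)) {c₂ : C(X, ℂ)}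
    (hc₂ : ∀ x, 0 < (c₂ x).re) :
    ∃ ζ, ∀ x, ‖p x‖ ^ 2 ≤ -4 * (quadraticPencil c₀ c₁ c₂ ζ x).re := by
  obtain ⟨α, hα, hαc₂⟩ : ∃ α > 0, ∀ x ∈ (univ : Set X), α ≤ (c₂ x).re :=
    isCompact_univ.exists_forall_le' (by fun_prop) fun x _ => hc₂ x
  set M := ‖p‖ ^ 2 + 4 * ‖c₁‖ + 4 * ‖c₀‖
  set η := max 1 (M / (4 * α))
  have hη : 1 ≤ η := le_max_left _ _
  have hM : M ≤ η * (4 * α) := (div_le_iff₀ (by positivity)).1 (le_max_right _ _)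
  refine ⟨Complex.I * η, fun x => ?_⟩
  have hre : (quadraticPencil c₀ c₁ c₂ (Complex.I * η) x).re =
      -(η ^ 2 * (c₂ x).re) - η * (c₁ x).im + (c₀ x).re := by
    simp [quadraticPencil_apply, mul_pow, ← Complex.ofReal_pow, sub_eq_add_neg]
  have hp : ‖p x‖ ^ 2 ≤ ‖p‖ ^ 2 := by gcongr; exact p.norm_coe_le_norm x
  have hc₁ : -(c₁ x).im ≤ ‖c₁‖ :=
    (neg_le_abs _).trans ((Complex.abs_im_le_norm _).trans (c₁.norm_coe_le_norm x))
  have hc₀ : (c₀ x).re ≤ ‖c₀‖ := (Complex.re_le_norm _).trans (c₀.norm_coe_le_norm x)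
  have hlower : ‖p x‖ ^ 2 + 4 * (η * -(c₁ x).im) + 4 * (c₀ x).re ≤ 4 * (η ^ 2 * (c₂ x).re) :=
    calc ‖p x‖ ^ 2 + 4 * (η * -(c₁ x).im) + 4 * (c₀ x).re
        ≤ ‖p‖ ^ 2 + 4 * (η * ‖c₁‖) + 4 * ‖c₀‖ := by gcongr
      _ ≤ η * ‖p‖ ^ 2 + 4 * (η * ‖c₁‖) + 4 * (η * ‖c₀‖) := by
          gcongr <;> exact le_mul_of_one_le_left (by positivity) hη
      _ = η * M := by ring
      _ ≤ η * (η * (4 * α)) := by gcongr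
      _ = 4 * (η ^ 2 * α) := by ring
      _ ≤ 4 * (η ^ 2 * (c₂ x).re) := by gcongr; exact hαc₂ x (mem_univ x)
  rw [hre]
  linarith

theorem compl_setOf_hasDirichletSolution_quadraticPencil_mem_codiscrete {l u : ℝ} (h : l < u)
    (p c₀ c₁ : C(Icc l u, ℂ)) {c₂ : C(Icc l u, ℂ)} (hc₂ : ∀ x, 0 < (c₂ x).re) :
    {ζ | HasDirichletSolution p (quadraticPencil c₀ c₁ c₂ ζ)}ᶜ ∈ Filter.codiscrete ℂ := by
  obtain ⟨ζ, hζ⟩ := exists_norm_sq_le_neg_re_quadraticPencil p c₀ c₁ hc₂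
  exact compl_setOf_hasDirichletSolution_mem_codiscrete h (differentiable_const p)
    (differentiable_quadraticPencil c₀ c₁ c₂) ⟨ζ, not_hasDirichletSolution_of_norm_sq_le hζ⟩

end QuadraticPencil

theorem exists_isOpen_inter_subset_singleton {X : Type*} [TopologicalSpace X] {s : Set X}
    (hs : sᶜ ∈ Filter.codiscrete X) (x : X) : ∃ U, IsOpen U ∧ x ∈ U ∧ s ∩ U ⊆ {x} := by
  have hx : sᶜ ∈ nhdsWithin x {x}ᶜ := by
    simpa [Filter.disjoint_principal_right] using mem_codiscrete.1 hs x
  obtain ⟨U, hU, hxU, hUs⟩ := mem_nhdsWithin.1 hx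
  exact ⟨U, hU, hxU, fun y hy => by_contra fun hne => hUs ⟨hy.2, hne⟩ hy.1⟩

theorem frakS_discrete_general (r : ℝ) (hr : 0 < r) (a : ℝ → ℝ) (ha : ContDiff ℝ 1 a)
    (ha0 : ∀ x ∈ Icc (-r) r, a x ≠ 0)
    (β₁ β₂ β₃ : ℝ → ℂ) (hβ₁ : ContinuousOn β₁ (Icc (-r) r)) (hβ₂ : ContinuousOn β₂ (Icc (-r) r))
    (hβ₃ : ContinuousOn β₃ (Icc (-r) r)) :
    ∀ ζ₀ : ℂ, ∃ U : Set ℂ, IsOpen U ∧ ζ₀ ∈ U ∧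
      frakS r a β₁ β₂ β₃ ∩ U ⊆ {ζ₀} := by
  have hac : Continuous a := ha.continuous
  have hda : Continuous (deriv a) := ha.continuous_deriv le_rfl
  rw [continuousOn_iff_continuous_domRestrict] at hβ₁ hβ₂ hβ₃
  let b₁ : C(Icc (-r) r, ℂ) := ⟨_, hβ₁⟩
  let b₂ : C(Icc (-r) r, ℂ) := ⟨_, hβ₂⟩
  let b₃ : C(Icc (-r) r, ℂ) := ⟨_, hβ₃⟩
  let α : C(Icc (-r) r, ℂ) := ⟨fun x => (a x : ℂ), by fun_prop⟩
  let α' : C(Icc (-r) r, ℂ) := ⟨fun x => ((deriv a x : ℝ) : ℂ), by fun_prop⟩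
  let c₁ : C(Icc (-r) r, ℂ) := Complex.I • (α * (b₁ - b₂) - α')
  have hα (x : Icc (-r) r) : 0 < ((α ^ 2) x).re := by
    have := ha0 x x.2
    simp only [ContinuousMap.pow_apply, α, ContinuousMap.coe_mk, ← Complex.ofReal_pow,
      Complex.ofReal_re]
    positivity
  have hsub : frakS r a β₁ β₂ β₃ ⊆
      {ζ | HasDirichletSolution (b₁ + b₂) (quadraticPencil b₃ c₁ (α ^ 2) ζ)} := by
    rintro ζ ⟨g, hg, hne, hode, hl, hu⟩
    refine hasDirichletSolution_of_contDiff hg (fun x => ?_) hl hu hne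
    rw [← hode x x.2, Hop, quadraticPencil_apply]
    simp only [b₁, b₂, b₃, c₁, α, α', ContinuousMap.add_apply, ContinuousMap.sub_apply,
      ContinuousMap.mul_apply, ContinuousMap.smul_apply, ContinuousMap.pow_apply,
      ContinuousMap.coe_mk, domRestrict_apply, smul_eq_mul]
    ring
  have hdisc := compl_setOf_hasDirichletSolution_quadraticPencil_mem_codiscrete
    (neg_lt_self hr) (b₁ + b₂) b₃ c₁ hα
  exact exists_isOpen_inter_subset_singleton
    (Filter.mem_of_superset hdisc (compl_subset_compl.2 hsub))

/-- `𝔖` is a discrete subset of `ℂ`. -/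
theorem frakS_discrete (r : ℝ) (hr : 0 < r) (a : ℝ → ℝ) (ha : ContDiff ℝ (⊤ : ℕ∞) a)
    (ha0 : ∀ x ∈ Icc (-r) r, a x ≠ 0)
    (β₁ β₂ β₃ : ℝ → ℂ) (hβ₁ : ContDiff ℝ (⊤ : ℕ∞) β₁) (hβ₂ : ContDiff ℝ (⊤ : ℕ∞) β₂)
    (hβ₃ : ContDiff ℝ (⊤ : ℕ∞) β₃) :
    ∀ ζ₀ : ℂ, ∃ U : Set ℂ, IsOpen U ∧ ζ₀ ∈ U ∧
      frakS r a β₁ β₂ β₃ ∩ U ⊆ {ζ₀} :=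
  frakS_discrete_general r hr a (ha.of_le (by simp)) ha0 β₁ β₂ β₃ hβ₁.continuous.continuousOn
    hβ₂.continuous.continuousOn hβ₃.continuous.continuousOn
end

section
/- For every compact K ⊂ ℝ there exist constants C < ∞ and γ₀ < ∞ such that for all s ∈ K and all γ ∈ ℝ with |γ| ≥ γ₀, writing ζ = s + iγ, the following holds: for all C^∞ functions f, φ, ψ : I → ℂ with f(−r) = f(r) = 0 and (H_ζ f)(x) = φ(x) + ψ′(x) for all x ∈ I, one has γ²·‖f‖_{L²(I)} + |γ|·‖f′‖_{L²(I)} ≤ C·‖φ‖_{L²(I)} + C·|γ|·‖ψ‖_{L²(I)}. -/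
open MeasureTheory Set

/-- The `L²` norm of `f` over the set `J ⊆ ℝ` (w.r.t. Lebesgue measure). -/
noncomputable def L2 (f : ℝ → ℂ) (J : Set ℝ) : ℝ := (∫ x in J, ‖f x‖ ^ 2) ^ ((1 : ℝ)/2)

/-!
Energy method. Write `H_ζ f = f'' + y` with `y = (β₁ + β₂) f' + c f`. As `f` vanishes at the
endpoints, the derivative of `Re ⟪f, f' - ψ⟫` has integral zero, and `f'' - ψ' = φ - y`, so
`∫ Re ⟪f', f' - ψ⟫ + Re ⟪f, φ - y⟫ = 0`. The real part of `ζ² a²` is `s² a² - γ² a²`, while every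
other term of `Re c` is `O(|γ|)`; since `|a|` is bounded below on `I`, for large `|γ|` the function
`-Re ⟪f, y⟫` is at least `t² ‖f‖²`, with `t` a small multiple of `|γ|`, up to a cross term
`(t / 2) ‖f‖ ‖f'‖`. The terms `‖f'‖²` and `t² ‖f‖²` absorb all cross terms by Young's inequality.
-/

open scoped RealInnerProductSpace

section EnergyEstimate

variable {E : Type*} [NormedAddCommGroup E] [InnerProductSpace ℝ E]

lemma integral_inner_deriv_add_deriv_inner {u v : ℝ → E} (hu : ContDiff ℝ 1 u)
    (hv : ContDiff ℝ 1 v) (p q : ℝ) :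
    ∫ x in p..q, (⟪u x, deriv v x⟫ + ⟪deriv u x, v x⟫) = ⟪u q, v q⟫ - ⟪u p, v p⟫ := by
  have hu' : Continuous (deriv u) := hu.continuous_deriv le_rfl
  have hv' : Continuous (deriv v) := hv.continuous_deriv le_rfl
  have hcont : Continuous fun x => ⟪u x, deriv v x⟫ + ⟪deriv u x, v x⟫ :=
    (hu.continuous.inner hv').add (hu'.inner hv.continuous)
  refine intervalIntegral.integral_eq_sub_of_hasDerivAt (f := fun x => ⟪u x, v x⟫)
    (fun x _ => ?_) (hcont.intervalIntegrable p q)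
  exact (hu.differentiable one_ne_zero x).hasDerivAt.inner ℝ
    (hv.differentiable one_ne_zero x).hasDerivAt

lemma energy_density_lower_bound {t : ℝ} {u v y φ ψ : E}
    (hy : ⟪u, y⟫ ≤ t / 2 * (‖u‖ * ‖v‖) - t ^ 2 * ‖u‖ ^ 2) :
    1 / 2 * (t ^ 4 * ‖u‖ ^ 2 + t ^ 2 * ‖v‖ ^ 2) - (‖φ‖ ^ 2 + t ^ 2 * ‖ψ‖ ^ 2)
      ≤ t ^ 2 * (⟪u, φ - y⟫ + ⟪v, v - ψ⟫) := by
  have hφ : -(‖u‖ * ‖φ‖) ≤ ⟪u, φ⟫ := neg_le_of_abs_le (abs_real_inner_le_norm u φ)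
  have hψ : ⟪v, ψ⟫ ≤ ‖v‖ * ‖ψ‖ := real_inner_le_norm v ψ
  have young_φ : t ^ 2 * (‖u‖ * ‖φ‖) ≤ t ^ 4 * ‖u‖ ^ 2 / 4 + ‖φ‖ ^ 2 := by
    linarith [sq_nonneg (t ^ 2 * ‖u‖ / 2 - ‖φ‖)]
  have young_ψ : ‖v‖ * ‖ψ‖ ≤ ‖v‖ ^ 2 / 4 + ‖ψ‖ ^ 2 := by
    linarith [sq_nonneg (‖v‖ / 2 - ‖ψ‖)]
  have young_y : t / 2 * (‖u‖ * ‖v‖) ≤ t ^ 2 * ‖u‖ ^ 2 / 4 + ‖v‖ ^ 2 / 4 := by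
    linarith [sq_nonneg (t * ‖u‖ / 2 - ‖v‖ / 2)]
  calc 1 / 2 * (t ^ 4 * ‖u‖ ^ 2 + t ^ 2 * ‖v‖ ^ 2) - (‖φ‖ ^ 2 + t ^ 2 * ‖ψ‖ ^ 2)
      ≤ t ^ 2 * (t ^ 2 * ‖u‖ ^ 2 * (3 / 4) + ‖v‖ ^ 2 / 2 - ‖ψ‖ ^ 2)
          - t ^ 2 * (‖u‖ * ‖φ‖) := by linarith
    _ = t ^ 2 * (-(‖u‖ * ‖φ‖) + t ^ 2 * ‖u‖ ^ 2 * (3 / 4) + ‖v‖ ^ 2 / 2 - ‖ψ‖ ^ 2) := by ring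
    _ ≤ t ^ 2 * (⟪u, φ - y⟫ + ⟪v, v - ψ⟫) := by
      rw [inner_sub_right, inner_sub_right, real_inner_self_eq_norm_sq]
      exact mul_le_mul_of_nonneg_left (by linarith) (sq_nonneg t)

lemma integral_energy_le {p q t : ℝ} (hpq : p ≤ q) {f y φ ψ : ℝ → E} (hf : ContDiff ℝ 2 f)
    (hφ : ContinuousOn φ (Icc p q)) (hψ : ContDiff ℝ 1 ψ) (hfp : f p = 0) (hfq : f q = 0)
    (heq : ∀ x ∈ Icc p q, deriv (deriv f) x + y x = φ x + deriv ψ x)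
    (hy : ∀ x ∈ Icc p q,
      ⟪f x, y x⟫ ≤ t / 2 * (‖f x‖ * ‖deriv f x‖) - t ^ 2 * ‖f x‖ ^ 2) :
    t ^ 4 * (∫ x in Icc p q, ‖f x‖ ^ 2) + t ^ 2 * (∫ x in Icc p q, ‖deriv f x‖ ^ 2)
      ≤ 2 * ((∫ x in Icc p q, ‖φ x‖ ^ 2) + t ^ 2 * ∫ x in Icc p q, ‖ψ x‖ ^ 2) := by
  have hf' : ContDiff ℝ 1 (deriv f) := hf.deriv' (n := 1)
  have hg : ContDiff ℝ 1 (deriv f - ψ) := hf'.sub hψ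
  have integrable_sq {h : ℝ → E} (hh : ContinuousOn h (Icc p q)) :
      IntegrableOn (fun x => ‖h x‖ ^ 2) (Icc p q) := (hh.norm.pow 2).integrableOn_Icc
  have hf_int := (integrable_sq hf.continuous.continuousOn).const_mul (t ^ 4)
  have hf'_int := (integrable_sq hf'.continuous.continuousOn).const_mul (t ^ 2)
  have hφ_int := integrable_sq hφ
  have hψ_int := (integrable_sq hψ.continuous.continuousOn).const_mul (t ^ 2)
  let e x := ⟪f x, deriv (deriv f - ψ) x⟫ + ⟪deriv f x, (deriv f - ψ) x⟫
  have he_int : IntegrableOn e (Icc p q) :=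
    ((hf.continuous.inner (hg.continuous_deriv le_rfl)).add
      (hf'.continuous.inner hg.continuous)).continuousOn.integrableOn_Icc
  have he_zero : ∫ x in Icc p q, e x = 0 := by
    rw [integral_Icc_eq_integral_Ioc, ← intervalIntegral.integral_of_le hpq,
      integral_inner_deriv_add_deriv_inner (hf.of_le one_le_two) hg, hfp, hfq,
      inner_zero_left, inner_zero_left, sub_zero]
  have hdensity (x : ℝ) (hx : x ∈ Icc p q) :
      1 / 2 * (t ^ 4 * ‖f x‖ ^ 2 + t ^ 2 * ‖deriv f x‖ ^ 2) - (‖φ x‖ ^ 2 + t ^ 2 * ‖ψ x‖ ^ 2)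
        ≤ t ^ 2 * e x := by
    have hg' : deriv (deriv f - ψ) x = φ x - y x := by
      rw [deriv_sub (hf'.differentiable one_ne_zero x) (hψ.differentiable one_ne_zero x),
        sub_eq_sub_iff_add_eq_add, heq x hx]
    simpa only [e, hg', Pi.sub_apply] using energy_density_lower_bound (hy x hx)
  have hmono := setIntegral_mono_on
    (((hf_int.add hf'_int).const_mul (1 / 2)).sub (hφ_int.add hψ_int)) (he_int.const_mul (t ^ 2))
    measurableSet_Icc hdensity
  rw [integral_sub' ((hf_int.add hf'_int).const_mul (1 / 2)) (hφ_int.add hψ_int),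
    integral_const_mul, integral_const_mul, he_zero, integral_add' hf_int hf'_int,
    integral_add' hφ_int hψ_int] at hmono
  simp only [integral_const_mul] at hmono
  linarith

end EnergyEstimate

lemma add_le_two_mul_add_of_sq_add_sq_le {A B P Q : ℝ} (hP : 0 ≤ P) (hQ : 0 ≤ Q)
    (h : A ^ 2 + B ^ 2 ≤ 2 * (P ^ 2 + Q ^ 2)) : A + B ≤ 2 * (P + Q) := by
  refine le_of_sq_le_sq ?_ (by positivity)
  calc (A + B) ^ 2 ≤ 2 * (A ^ 2 + B ^ 2) := add_sq_le
    _ ≤ 4 * (P ^ 2 + Q ^ 2) := by linarith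
    _ ≤ (2 * (P + Q)) ^ 2 := by linarith [mul_nonneg hP hQ]

lemma L2_eq_sqrt (f : ℝ → ℂ) (J : Set ℝ) : L2 f J = √(∫ x in J, ‖f x‖ ^ 2) := by
  rw [L2, Real.sqrt_eq_rpow]

lemma L2_nonneg (f : ℝ → ℂ) (J : Set ℝ) : 0 ≤ L2 f J := by
  rw [L2_eq_sqrt]
  exact Real.sqrt_nonneg _

lemma L2_sq (f : ℝ → ℂ) (J : Set ℝ) : L2 f J ^ 2 = ∫ x in J, ‖f x‖ ^ 2 := by
  rw [L2_eq_sqrt, Real.sq_sqrt (integral_nonneg fun _ => sq_nonneg _)]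

lemma L2_energy_le {p q t : ℝ} (hpq : p ≤ q) (ht : 0 ≤ t) {f y φ ψ : ℝ → ℂ}
    (hf : ContDiff ℝ 2 f) (hφ : ContinuousOn φ (Icc p q)) (hψ : ContDiff ℝ 1 ψ)
    (hfp : f p = 0) (hfq : f q = 0)
    (heq : ∀ x ∈ Icc p q, deriv (deriv f) x + y x = φ x + deriv ψ x)
    (hy : ∀ x ∈ Icc p q,
      ⟪f x, y x⟫ ≤ t / 2 * (‖f x‖ * ‖deriv f x‖) - t ^ 2 * ‖f x‖ ^ 2) :
    t ^ 2 * L2 f (Icc p q) + t * L2 (deriv f) (Icc p q)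
      ≤ 2 * (L2 φ (Icc p q) + t * L2 ψ (Icc p q)) := by
  have henergy := integral_energy_le hpq hf hφ hψ hfp hfq heq hy
  simp only [← L2_sq] at henergy
  refine add_le_two_mul_add_of_sq_add_sq_le (L2_nonneg _ _) (mul_nonneg ht (L2_nonneg _ _)) ?_
  linarith

/-- The zeroth-order coefficient of the operator `H_ζ`, i.e. the factor of `f x` in
`Hop a β₁ β₂ β₃ ζ f x`. -/
noncomputable def hopPotential (a : ℝ → ℝ) (β₁ β₂ β₃ : ℝ → ℂ) (ζ : ℂ) (x : ℝ) : ℂ :=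
  ζ ^ 2 * (a x : ℂ) ^ 2 - Complex.I * ζ * ((deriv a x : ℝ) : ℂ)
    + Complex.I * ζ * (a x : ℂ) * (β₁ x - β₂ x) + β₃ x

section Potential

variable {p q : ℝ} {a : ℝ → ℝ} {β₁ β₂ β₃ : ℝ → ℂ}

lemma hop_eq (a : ℝ → ℝ) (β₁ β₂ β₃ : ℝ → ℂ) (ζ : ℂ) (f : ℝ → ℂ) (x : ℝ) :
    Hop a β₁ β₂ β₃ ζ f x
      = deriv (deriv f) x + ((β₁ x + β₂ x) * deriv f x + hopPotential a β₁ β₂ β₃ ζ x * f x) :=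
  add_assoc _ _ _

lemma continuousOn_hop (ha : ContDiff ℝ 1 a) (hβ₁ : ContinuousOn β₁ (Icc p q))
    (hβ₂ : ContinuousOn β₂ (Icc p q)) (hβ₃ : ContinuousOn β₃ (Icc p q)) (ζ : ℂ) {f : ℝ → ℂ}
    (hf : ContDiff ℝ 2 f) : ContinuousOn (Hop a β₁ β₂ β₃ ζ f) (Icc p q) := by
  have hf₁ : ContDiff ℝ 1 (deriv f) := hf.deriv' (n := 1)
  have := ha.continuous
  have := hf.continuous
  have := hf₁.continuous
  unfold Hop
  fun_prop

lemma hopPotential_mk_re (s γ x : ℝ) :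
    (hopPotential a β₁ β₂ β₃ ⟨s, γ⟩ x).re
      = -γ ^ 2 * a x ^ 2 + γ * (deriv a x - a x * (β₁ x - β₂ x).re)
        + (s ^ 2 * a x ^ 2 - s * (a x * (β₁ x - β₂ x).im) + (β₃ x).re) := by
  simp only [hopPotential, pow_two, Complex.add_re, Complex.sub_re, Complex.sub_im, Complex.mul_re,
    Complex.mul_im, Complex.ofReal_re, Complex.ofReal_im, Complex.I_re, Complex.I_im]
  ring

lemma exists_hopPotential_re_le (ha : ContDiff ℝ 1 a) (hβ₁ : ContinuousOn β₁ (Icc p q))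
    (hβ₂ : ContinuousOn β₂ (Icc p q)) (hβ₃ : ContinuousOn β₃ (Icc p q)) {K : Set ℝ}
    (hK : Bornology.IsBounded K) :
    ∃ N : ℝ, ∀ s ∈ K, ∀ γ : ℝ, 1 ≤ |γ| → ∀ x ∈ Icc p q,
      (hopPotential a β₁ β₂ β₃ ⟨s, γ⟩ x).re ≤ -γ ^ 2 * a x ^ 2 + N * |γ| := by
  have := ha.continuous
  obtain ⟨N₁, hN₁⟩ := isCompact_Icc.exists_bound_of_continuousOn (s := Icc p q)
    (f := fun x => deriv a x - a x * (β₁ x - β₂ x).re) (by fun_prop)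
  have : MapsTo Prod.snd (closure K ×ˢ Icc p q) (Icc p q) := fun _ hz => hz.2
  obtain ⟨N₀, hN₀⟩ := (hK.isCompact_closure.prod isCompact_Icc).exists_bound_of_continuousOn
    (s := closure K ×ˢ Icc p q) (f := fun z : ℝ × ℝ => z.1 ^ 2 * a z.2 ^ 2
      - z.1 * (a z.2 * (β₁ z.2 - β₂ z.2).im) + (β₃ z.2).re) (by fun_prop)
  refine ⟨N₁ + N₀, fun s hs γ hγ x hx => ?_⟩
  have linear_le : γ * (deriv a x - a x * (β₁ x - β₂ x).re) ≤ N₁ * |γ| :=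
    calc _ ≤ |γ * (deriv a x - a x * (β₁ x - β₂ x).re)| := le_abs_self _
      _ = |γ| * |deriv a x - a x * (β₁ x - β₂ x).re| := abs_mul _ _
      _ ≤ |γ| * N₁ := mul_le_mul_of_nonneg_left (hN₁ x hx) (abs_nonneg γ)
      _ = N₁ * |γ| := mul_comm _ _
  have const_bound := hN₀ (s, x) ⟨subset_closure hs, hx⟩
  have const_le : s ^ 2 * a x ^ 2 - s * (a x * (β₁ x - β₂ x).im) + (β₃ x).re ≤ N₀ * |γ| :=
    calc _ ≤ N₀ := (le_abs_self _).trans const_bound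
      _ ≤ N₀ * |γ| := le_mul_of_one_le_right ((norm_nonneg _).trans const_bound) hγ
  rw [hopPotential_mk_re]
  linarith

lemma real_inner_mul_self_right (c u : ℂ) : ⟪u, c * u⟫ = c.re * ‖u‖ ^ 2 := by
  rw [Complex.inner, ← Complex.normSq_eq_norm_sq, Complex.normSq_apply]
  simp only [Complex.mul_re, Complex.mul_im, Complex.conj_re, Complex.conj_im]
  ring

lemma exists_inner_lowerOrder_le (ha : ContDiff ℝ 1 a) (hβ₁ : ContinuousOn β₁ (Icc p q))
    (hβ₂ : ContinuousOn β₂ (Icc p q)) (hβ₃ : ContinuousOn β₃ (Icc p q)) {K : Set ℝ}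
    (hK : Bornology.IsBounded K) {δ : ℝ} (hδ : 0 < δ) (haδ : ∀ x ∈ Icc p q, 2 * δ ≤ |a x|) :
    ∃ γ₀ : ℝ, ∀ s ∈ K, ∀ γ : ℝ, γ₀ ≤ |γ| → ∀ x ∈ Icc p q, ∀ u v : ℂ,
      ⟪u, (β₁ x + β₂ x) * v + hopPotential a β₁ β₂ β₃ ⟨s, γ⟩ x * u⟫
        ≤ δ * |γ| / 2 * (‖u‖ * ‖v‖) - (δ * |γ|) ^ 2 * ‖u‖ ^ 2 := by
  obtain ⟨M, hM⟩ := isCompact_Icc.exists_bound_of_continuousOn (hβ₁.add hβ₂)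
  obtain ⟨N, hN⟩ := exists_hopPotential_re_le ha hβ₁ hβ₂ hβ₃ hK
  refine ⟨max 1 (max (2 * M / δ) (N / δ ^ 2)), fun s hs γ hγ x hx u v => ?_⟩
  obtain ⟨hγ_one, hγM, hγN⟩ : 1 ≤ |γ| ∧ 2 * M / δ ≤ |γ| ∧ N / δ ^ 2 ≤ |γ| := by
    simpa only [max_le_iff] using hγ
  rw [div_le_iff₀' hδ] at hγM
  rw [div_le_iff₀' (by positivity)] at hγN
  have cross_le : ⟪u, (β₁ x + β₂ x) * v⟫ ≤ δ * |γ| / 2 * (‖u‖ * ‖v‖) :=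
    calc _ ≤ ‖u‖ * (‖β₁ x + β₂ x‖ * ‖v‖) := norm_mul (β₁ x + β₂ x) v ▸ real_inner_le_norm _ _
      _ = ‖β₁ x + β₂ x‖ * (‖u‖ * ‖v‖) := by ring
      _ ≤ δ * |γ| / 2 * (‖u‖ * ‖v‖) := by
        have : ‖β₁ x + β₂ x‖ ≤ M := hM x hx
        gcongr
        linarith
  have sq_a_ge : (2 * δ) ^ 2 ≤ a x ^ 2 := by
    rw [← sq_abs (a x)]
    exact pow_le_pow_left₀ (by positivity) (haδ x hx) 2
  have re_le : (hopPotential a β₁ β₂ β₃ ⟨s, γ⟩ x).re ≤ -(δ * |γ|) ^ 2 :=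
    calc _ ≤ -γ ^ 2 * a x ^ 2 + N * |γ| := hN s hs γ hγ_one x hx
      _ ≤ -γ ^ 2 * (2 * δ) ^ 2 + δ ^ 2 * |γ| * |γ| := by
        have := mul_le_mul_of_nonneg_left sq_a_ge (sq_nonneg γ)
        have := mul_le_mul_of_nonneg_right hγN (abs_nonneg γ)
        linarith
      _ ≤ -(δ * |γ|) ^ 2 := by
        rw [← sq_abs γ]
        linarith [sq_nonneg (δ * |γ|)]
  rw [inner_add_right, real_inner_mul_self_right]
  linarith [mul_le_mul_of_nonneg_right re_le (sq_nonneg ‖u‖)]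

end Potential

lemma exists_pos_le_one_two_mul_le_norm {X E : Type*} [TopologicalSpace X]
    [NormedAddCommGroup E] {I : Set X} (hI : IsCompact I) {g : X → E} (hg : ContinuousOn g I)
    (hg₀ : ∀ x ∈ I, g x ≠ 0) :
    ∃ δ : ℝ, 0 < δ ∧ δ ≤ 1 ∧ ∀ x ∈ I, 2 * δ ≤ ‖g x‖ := by
  obtain ⟨ε, hε, hgε⟩ := hI.exists_forall_le' hg.norm fun x hx => norm_pos_iff.mpr (hg₀ x hx)
  refine ⟨min (ε / 2) 1, by positivity, min_le_right _ _, fun x hx => ?_⟩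
  linarith [min_le_left (ε / 2) 1, hgε x hx]

theorem estimate_5_2_general {p q : ℝ} (hpq : p ≤ q) {a : ℝ → ℝ} (ha : ContDiff ℝ 1 a)
    (ha₀ : ∀ x ∈ Icc p q, a x ≠ 0) {β₁ β₂ β₃ : ℝ → ℂ} (hβ₁ : ContinuousOn β₁ (Icc p q))
    (hβ₂ : ContinuousOn β₂ (Icc p q)) (hβ₃ : ContinuousOn β₃ (Icc p q)) {K : Set ℝ}
    (hK : Bornology.IsBounded K) :
    ∃ C γ₀ : ℝ, ∀ s ∈ K, ∀ γ : ℝ, γ₀ ≤ |γ| → ∀ f φ ψ : ℝ → ℂ,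
      ContDiff ℝ 2 f → ContDiff ℝ 1 ψ → f p = 0 → f q = 0 →
      (∀ x ∈ Icc p q, Hop a β₁ β₂ β₃ ⟨s, γ⟩ f x = φ x + deriv ψ x) →
      γ ^ 2 * L2 f (Icc p q) + |γ| * L2 (deriv f) (Icc p q)
        ≤ C * L2 φ (Icc p q) + C * |γ| * L2 ψ (Icc p q) := by
  obtain ⟨δ, hδ, hδ_one, haδ⟩ :=
    exists_pos_le_one_two_mul_le_norm isCompact_Icc ha.continuous.continuousOn ha₀
  obtain ⟨γ₀, hcoercive⟩ := exists_inner_lowerOrder_le ha hβ₁ hβ₂ hβ₃ hK hδ haδ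
  refine ⟨2 / δ ^ 2, γ₀, fun s hs γ hγ f φ ψ hf hψ hfp hfq heq => ?_⟩
  have hφ : ContinuousOn φ (Icc p q) :=
    ((continuousOn_hop ha hβ₁ hβ₂ hβ₃ ⟨s, γ⟩ hf).sub
      (hψ.continuous_deriv le_rfl).continuousOn).congr fun x hx => eq_sub_of_add_eq (heq x hx).symm
  have hestimate := L2_energy_le hpq (t := δ * |γ|) (by positivity) hf hφ hψ hfp hfq
    (fun x hx => (hop_eq a β₁ β₂ β₃ ⟨s, γ⟩ f x).symm.trans (heq x hx))
    fun x hx => hcoercive s hs γ hγ x hx (f x) (deriv f x)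
  have hf'_nonneg : 0 ≤ |γ| * L2 (deriv f) (Icc p q) := mul_nonneg (abs_nonneg γ) (L2_nonneg _ _)
  have hψ_nonneg : 0 ≤ |γ| * L2 ψ (Icc p q) := mul_nonneg (abs_nonneg γ) (L2_nonneg _ _)
  have hδ_sq : δ ^ 2 ≤ δ := pow_le_of_le_one hδ.le hδ_one two_ne_zero
  calc γ ^ 2 * L2 f (Icc p q) + |γ| * L2 (deriv f) (Icc p q)
      ≤ 2 * (L2 φ (Icc p q) + |γ| * L2 ψ (Icc p q)) / δ ^ 2 := by
        rw [le_div_iff₀ (by positivity)]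
        rw [mul_pow, sq_abs] at hestimate
        linarith [mul_le_mul_of_nonneg_right hδ_sq hf'_nonneg,
          mul_le_mul_of_nonneg_right hδ_one hψ_nonneg]
    _ = 2 / δ ^ 2 * L2 φ (Icc p q) + 2 / δ ^ 2 * |γ| * L2 ψ (Icc p q) := by ring

/-- Inequality (5.2): for `s` in a compact set and `|γ|` large, functions vanishing at the
endpoints of `I` with `H_ζ f = φ + ψ'`, `ζ = s + iγ`, obey
`γ²‖f‖ + |γ|‖f′‖ ≤ C‖φ‖ + C|γ|‖ψ‖`. -/
theorem estimate_5_2 (r : ℝ) (hr : 0 < r) (a : ℝ → ℝ) (ha : ContDiff ℝ (⊤ : ℕ∞) a)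
    (ha0 : ∀ x ∈ Icc (-r) r, a x ≠ 0)
    (β₁ β₂ β₃ : ℝ → ℂ) (hβ₁ : ContDiff ℝ (⊤ : ℕ∞) β₁) (hβ₂ : ContDiff ℝ (⊤ : ℕ∞) β₂)
    (hβ₃ : ContDiff ℝ (⊤ : ℕ∞) β₃)
    (K : Set ℝ) (hK : IsCompact K) :
    ∃ C : ℝ, ∃ γ₀ : ℝ, ∀ s ∈ K, ∀ γ : ℝ, γ₀ ≤ |γ| →
      ∀ f φ ψ : ℝ → ℂ,
        ContDiff ℝ (⊤ : ℕ∞) f → ContDiff ℝ (⊤ : ℕ∞) φ → ContDiff ℝ (⊤ : ℕ∞) ψ →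
        f (-r) = 0 → f r = 0 →
        (∀ x ∈ Icc (-r) r,
          Hop a β₁ β₂ β₃ (Complex.mk s γ) f x = φ x + deriv ψ x) →
        γ ^ 2 * L2 f (Icc (-r) r) + |γ| * L2 (deriv f) (Icc (-r) r)
          ≤ C * L2 φ (Icc (-r) r) + C * |γ| * L2 ψ (Icc (-r) r) := by
  obtain ⟨C, γ₀, h⟩ := estimate_5_2_general (neg_le_self hr.le) (contDiff_infty.mp ha 1) ha0
    hβ₁.continuous.continuousOn hβ₂.continuous.continuousOn hβ₃.continuous.continuousOn hK.isBounded
  exact ⟨C, γ₀, fun s hs γ hγ f φ ψ hf _ hψ =>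
    h s hs γ hγ f φ ψ (contDiff_infty.mp hf 2) (contDiff_infty.mp hψ 1)⟩
end
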